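/- Let d ∈ ℕ with d ≥ 1, let 𝒟 be a set of datasets equipped with an adjacency relation ∼, and let f : 𝒟 → (Fin d → ℝ) be a query function whose ℓ₂ global sensitivity is bounded by Δ > 0, i.e., for all D ∼ D', (∑_{i} (f(D)_i − f(D')_i)²)^{1/2} ≤ Δ. Let ε, δ ∈ (0, 1) and set σ = Δ·√(2·log(1.25/δ))/ε. Define the mechanism M(D) to be the probability measure on ℝ^d given by independent Gaussian coordinates, M(D) = ⨂_{i ∈ Fin d} N(f(D)_i, σ²) (i.e., the law of f(D) + η with η ~ N(0, σ²·I_{d×d})). Then M satisfies (ε, δ)-differential privacy: for all D ∼ D' and every measurable E ⊆ ℝ^d, M(D)(E) ≤ e^ε · M(D')(E) + δ. -/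

import Mathlib

open MeasureTheory ProbabilityTheory

theorem MeasureTheory.Measure.pi_withDensity {ι : Type*} [Fintype ι] {X : ι → Type*}
    [∀ i, MeasurableSpace (X i)] (μ : ∀ i, Measure (X i)) [∀ i, IsProbabilityMeasure (μ i)]
    {g : ∀ i, X i → ENNReal} (hg : ∀ i, Measurable (g i))
    [∀ i, SigmaFinite ((μ i).withDensity (g i))] :
    Measure.pi (fun i => (μ i).withDensity (g i)) =
      (Measure.pi μ).withDensity (fun x => ∏ i, g i (x i)) := by
  refine (Measure.pi_eq fun s hs => ?_)
  have hind : ∀ i, Measurable ((s i).indicator (g i)) := fun i => (hg i).indicator (hs i)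
  calc (Measure.pi μ).withDensity (fun x => ∏ i, g i (x i)) (Set.univ.pi s)
      = ∫⁻ x, ∏ i, (s i).indicator (g i) (x i) ∂Measure.pi μ := by
        rw [withDensity_apply _ (MeasurableSet.univ_pi hs),
          ← lintegral_indicator (MeasurableSet.univ_pi hs)]
        congr 1 with x
        by_cases hx : x ∈ Set.univ.pi s
        · rw [Set.indicator_of_mem hx]
          exact Finset.prod_congr rfl fun i _ => (Set.indicator_of_mem (hx i trivial) _).symm
        · rw [Set.indicator_of_notMem hx]
          obtain ⟨i, hi⟩ : ∃ i, x i ∉ s i := by simpa [Set.mem_pi] using hx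
          exact (Finset.prod_eq_zero (Finset.mem_univ i) (Set.indicator_of_notMem hi _)).symm
    _ = ∏ i, ∫⁻ x, (s i).indicator (g i) (x i) ∂Measure.pi μ :=
        lintegral_prod_eq_prod_lintegral_of_indepFun Finset.univ _
          (iIndepFun_pi fun i => (hind i).aemeasurable)
          fun i => (hind i).comp (measurable_pi_apply i)
    _ = ∏ i, (μ i).withDensity (g i) (s i) := by
        refine Finset.prod_congr rfl fun i _ => ?_
        rw [withDensity_apply _ (hs i), ← lintegral_indicator (hs i)]
        exact (measurePreserving_eval μ i).lintegral_comp (hind i)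

namespace ProbabilityTheory

theorem gaussianReal_eq_withDensity_gaussianReal (a b : ℝ) {v : NNReal} (hv : v ≠ 0) :
    gaussianReal a v = (gaussianReal b v).withDensity
      (fun x => ENNReal.ofReal (Real.exp (((x - b) ^ 2 - (x - a) ^ 2) / (2 * v)))) := by
  rw [gaussianReal_of_var_ne_zero a hv, gaussianReal_of_var_ne_zero b hv,
    ← withDensity_mul _ (measurable_gaussianPDF b v) (by fun_prop)]
  congr 1 with x
  rw [Pi.mul_apply, gaussianPDF, gaussianPDF, ← ENNReal.ofReal_mul (gaussianPDFReal_nonneg _ _ _),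
    gaussianPDFReal, gaussianPDFReal, mul_assoc (√_)⁻¹, ← Real.exp_add]
  congr 3
  ring

theorem pi_gaussianReal_eq_withDensity {d : ℕ} (a b : Fin d → ℝ) {v : NNReal} (hv : v ≠ 0) :
    Measure.pi (fun i => gaussianReal (a i) v) =
      (Measure.pi (fun i => gaussianReal (b i) v)).withDensity (fun x => ENNReal.ofReal
        (Real.exp (∑ i, ((x i - b i) ^ 2 - (x i - a i) ^ 2) / (2 * v)))) := by
  have h := fun i => gaussianReal_eq_withDensity_gaussianReal (a i) (b i) hv
  have (i : Fin d) : SigmaFinite ((gaussianReal (b i) v).withDensity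
      (fun x => ENNReal.ofReal (Real.exp (((x - b i) ^ 2 - (x - a i) ^ 2) / (2 * v))))) := by
    rw [← h i]; infer_instance
  simp_rw [Real.exp_sum, ENNReal.ofReal_prod_of_nonneg fun i _ => (Real.exp_pos _).le]
  exact (congrArg _ (funext h)).trans (Measure.pi_withDensity _ fun i => by fun_prop)

theorem map_linear_pi_gaussianReal {d : ℕ} (c a : Fin d → ℝ) (v : NNReal) :
    (Measure.pi (fun i => gaussianReal (a i) v)).map (fun x => ∑ i, c i * (x i - a i)) =
      gaussianReal 0 (∑ i, (c i ^ 2).toNNReal * v) := by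
  have hmap (i : Fin d) : (gaussianReal (a i) v).map (fun x => c i * (x - a i)) =
      gaussianReal 0 ((c i ^ 2).toNNReal * v) := by
    rw [← Function.comp_def (fun y => c i * y) (fun x => x - a i),
      ← Measure.map_map (by fun_prop) (by fun_prop), gaussianReal_map_sub_const,
      gaussianReal_map_const_mul, sub_self, mul_zero, Real.toNNReal_of_nonneg (sq_nonneg _)]
  have hcomp : (fun x : Fin d → ℝ => ∑ i, c i * (x i - a i)) =
      (fun y => ∑ i, y i) ∘ (fun x i => c i * (x i - a i)) := rfl
  rw [hcomp, ← Measure.map_map (by fun_prop) (by fun_prop),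
    Measure.pi_map_pi (f := fun i y => c i * (y - a i)) (fun i => by fun_prop)]
  simp_rw [hmap]
  refine Measure.ext_of_charFun (funext fun t => ?_)
  rw [charFun_map_sum_pi_eq_prod]
  simp only [Finset.prod_apply, charFun_gaussianReal, ← Complex.exp_sum]
  congr 1
  push_cast
  simp [Finset.sum_mul, Finset.sum_div, Finset.sum_neg_distrib]

theorem gaussianReal_zero_Ioi_le_half (v : NNReal) :
    gaussianReal 0 v (Set.Ioi 0) ≤ ENNReal.ofReal (1 / 2) := by
  have hneg : gaussianReal 0 v (Set.Iio 0) = gaussianReal 0 v (Set.Ioi 0) := by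
    conv_lhs => rw [← neg_zero (G := ℝ), ← gaussianReal_map_neg, neg_zero]
    rw [Measure.map_apply (by fun_prop) measurableSet_Iio]
    congr 1 with x
    simp
  have hle : gaussianReal 0 v (Set.Ioi 0) + gaussianReal 0 v (Set.Ioi 0) ≤ 1 := by
    nth_rewrite 1 [← hneg]
    have hdisj : Disjoint (Set.Iio (0 : ℝ)) (Set.Ioi 0) :=
      Set.disjoint_left.2 fun x (hx : x < 0) (hx' : 0 < x) => lt_asymm hx hx'
    rw [← measure_union hdisj measurableSet_Ioi]
    exact prob_le_one
  rw [← two_mul] at hle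
  rw [ENNReal.ofReal_div_of_pos two_pos, ENNReal.le_div_iff_mul_le (by simp) (by simp), mul_comm]
  simpa using hle

theorem gaussianReal_Ioi_le_of_nonneg {t : ℝ} (ht : 0 ≤ t) :
    gaussianReal 0 1 (Set.Ioi t) ≤ ENNReal.ofReal (Real.exp (-t ^ 2 / 2) / 2) := by
  have hshift : gaussianReal 0 1 (Set.Ioi t) = gaussianReal (-t) 1 (Set.Ioi 0) := by
    rw [← zero_sub t, ← gaussianReal_map_sub_const,
      Measure.map_apply (by fun_prop) measurableSet_Ioi]
    congr 1 with x
    simp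
  calc gaussianReal 0 1 (Set.Ioi t)
      = ∫⁻ x in Set.Ioi 0, gaussianPDF (-t) 1 x := by
        rw [hshift, gaussianReal_apply _ one_ne_zero]
    _ ≤ ∫⁻ x in Set.Ioi 0, ENNReal.ofReal (Real.exp (-t ^ 2 / 2)) * gaussianPDF 0 1 x := by
        refine setLIntegral_mono (by fun_prop) fun x hx => ?_
        rw [gaussianPDF, gaussianPDF, ← ENNReal.ofReal_mul (Real.exp_pos _).le]
        refine ENNReal.ofReal_le_ofReal ?_
        rw [gaussianPDFReal, gaussianPDFReal, mul_left_comm, ← Real.exp_add]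
        gcongr
        have : 0 ≤ x * t := mul_nonneg (le_of_lt hx) ht
        simp only [NNReal.coe_one]
        nlinarith
    _ = ENNReal.ofReal (Real.exp (-t ^ 2 / 2)) * gaussianReal 0 1 (Set.Ioi 0) := by
        rw [lintegral_const_mul _ (by fun_prop), gaussianReal_apply _ one_ne_zero]
    _ ≤ ENNReal.ofReal (Real.exp (-t ^ 2 / 2)) * ENNReal.ofReal (1 / 2) := by
        gcongr
        exact gaussianReal_zero_Ioi_le_half 1
    _ = ENNReal.ofReal (Real.exp (-t ^ 2 / 2) / 2) := by
        rw [← ENNReal.ofReal_mul (Real.exp_pos _).le, mul_one_div]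

theorem gaussianReal_Ioi_le_of_nonpos {t : ℝ} (ht : t ≤ 0) :
    gaussianReal 0 1 (Set.Ioi t) ≤ ENNReal.ofReal (1 / 2 - t) := by
  have hpdf (x : ℝ) : gaussianPDF 0 1 x ≤ 1 := by
    rw [gaussianPDF, ENNReal.ofReal_le_one, gaussianPDFReal]
    refine mul_le_one₀ (inv_le_one_of_one_le₀ ?_) (Real.exp_pos _).le (Real.exp_le_one_iff.2 ?_)
    · rw [Real.one_le_sqrt]
      simp only [NNReal.coe_one]
      linarith [Real.pi_gt_three]
    · exact div_nonpos_of_nonpos_of_nonneg (neg_nonpos.2 (sq_nonneg _)) (by positivity)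
  have hIoc : gaussianReal 0 1 (Set.Ioc t 0) ≤ ENNReal.ofReal (-t) := by
    rw [gaussianReal_apply _ one_ne_zero]
    calc ∫⁻ x in Set.Ioc t 0, gaussianPDF 0 1 x ≤ ∫⁻ _ in Set.Ioc t 0, 1 :=
          lintegral_mono hpdf
      _ = ENNReal.ofReal (-t) := by simp
  rw [← Set.Ioc_union_Ioi_eq_Ioi ht, sub_eq_neg_add,
    ENNReal.ofReal_add (neg_nonneg.2 ht) (by norm_num)]
  exact (measure_union_le _ _).trans (add_le_add hIoc (gaussianReal_zero_Ioi_le_half 1))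

/-- The tail bound behind the calibration `c = √(2 log (1.25 / δ))` of the Gaussian mechanism. -/
theorem gaussianReal_Ioi_calibrated_le {ε δ : ℝ} (hε : ε ∈ Set.Ioo (0 : ℝ) 1)
    (hδ : δ ∈ Set.Ioo (0 : ℝ) 1) {c : ℝ} (hc : c = Real.sqrt (2 * Real.log (1.25 / δ))) :
    gaussianReal 0 1 (Set.Ioi (c - ε / (2 * c))) ≤ ENNReal.ofReal δ := by
  obtain ⟨hε0, hε1⟩ := hε
  obtain ⟨hδ0, hδ1⟩ := hδ
  have hr : (0 : ℝ) < 1.25 / δ := by positivity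
  have hlog : 1 / 5 ≤ Real.log (1.25 / δ) := by
    have h := Real.one_sub_inv_le_log_of_pos hr
    have : (1.25 / δ)⁻¹ = 0.8 * δ := by field_simp; norm_num
    rw [this] at h
    linarith
  have hcsq : c ^ 2 = 2 * Real.log (1.25 / δ) := by rw [hc, Real.sq_sqrt (by linarith)]
  have hc0 : 0.6 ≤ c := by
    rw [hc]
    exact Real.le_sqrt_of_sq_le (by linarith)
  have hδexp : Real.exp (-(c ^ 2 / 2)) = 0.8 * δ := by
    rw [hcsq, mul_div_cancel_left₀ _ two_ne_zero, Real.exp_neg, Real.exp_log hr]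
    field_simp
    norm_num
  have hcpos : 0 < c := by linarith
  rcases le_total 0 (c - ε / (2 * c)) with ht | ht
  · refine (gaussianReal_Ioi_le_of_nonneg ht).trans (ENNReal.ofReal_le_ofReal ?_)
    have hsq : c ^ 2 - ε ≤ (c - ε / (2 * c)) ^ 2 := by
      have : (c - ε / (2 * c)) ^ 2 = c ^ 2 - ε + (ε / (2 * c)) ^ 2 := by field_simp; ring
      rw [this]
      linarith [sq_nonneg (ε / (2 * c))]
    have hhalf : Real.exp (1 / 2) ≤ 2 := by
      rw [← Real.le_log_iff_exp_le two_pos]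
      linarith [Real.log_two_gt_d9]
    calc Real.exp (-(c - ε / (2 * c)) ^ 2 / 2) / 2
        ≤ Real.exp (-(c ^ 2 / 2) + 1 / 2) / 2 := by
          gcongr
          linarith
      _ ≤ 0.8 * δ * 2 / 2 := by
          rw [Real.exp_add, hδexp]
          gcongr
      _ ≤ δ := by linarith
  · refine (gaussianReal_Ioi_le_of_nonpos ht).trans (ENNReal.ofReal_le_ofReal ?_)
    have hle : c ^ 2 ≤ 1 / 2 := by
      have : c ≤ ε / (2 * c) := by linarith
      rw [le_div_iff₀ (by positivity)] at this
      linarith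
    have hquot : ε / (2 * c) ≤ 0.84 := by
      rw [div_le_iff₀ (by positivity)]
      linarith
    linarith [Real.add_one_le_exp (-(c ^ 2 / 2))]

/-- Splitting an event according to whether the privacy loss `ℓ` exceeds `ε`. -/
theorem withDensity_exp_le_add {Ω : Type*} [MeasurableSpace Ω] (μ : Measure Ω) {ℓ : Ω → ℝ}
    (hℓ : Measurable ℓ) (ε : ℝ) {E : Set Ω} (hE : MeasurableSet E) :
    μ.withDensity (fun x => ENNReal.ofReal (Real.exp (ℓ x))) E ≤
      ENNReal.ofReal (Real.exp ε) * μ E +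
        μ.withDensity (fun x => ENNReal.ofReal (Real.exp (ℓ x))) {x | ε < ℓ x} := by
  set ν := μ.withDensity (fun x => ENNReal.ofReal (Real.exp (ℓ x)))
  have hB : MeasurableSet {x | ε < ℓ x} := measurableSet_lt measurable_const hℓ
  refine (measure_le_inter_add_sdiff ν E {x | ε < ℓ x}).trans ?_
  rw [add_comm]
  refine add_le_add ?_ (measure_mono Set.inter_subset_right)
  calc ν (E \ {x | ε < ℓ x})
      = ∫⁻ x in E \ {x | ε < ℓ x}, ENNReal.ofReal (Real.exp (ℓ x)) ∂μ :=
        withDensity_apply _ (hE.diff hB)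
    _ ≤ ∫⁻ _ in E \ {x | ε < ℓ x}, ENNReal.ofReal (Real.exp ε) ∂μ :=
        setLIntegral_mono measurable_const fun x hx =>
          ENNReal.ofReal_le_ofReal (Real.exp_le_exp.2 (not_lt.1 hx.2))
    _ ≤ ENNReal.ofReal (Real.exp ε) * μ E := by
        rw [setLIntegral_const]
        gcongr
        exact Set.sdiff_subset

theorem pi_gaussianReal_le_add {d : ℕ} (a b : Fin d → ℝ) {r σ : ℝ} (hr : 0 < r) (hσ : 0 < σ)
    (hsum : ∑ i, (a i - b i) ^ 2 = r ^ 2) (ε : ℝ) {E : Set (Fin d → ℝ)} (hE : MeasurableSet E) :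
    Measure.pi (fun i => gaussianReal (a i) (σ ^ 2).toNNReal) E ≤
      ENNReal.ofReal (Real.exp ε) *
        Measure.pi (fun i => gaussianReal (b i) (σ ^ 2).toNNReal) E +
      gaussianReal 0 1 (Set.Ioi (ε * σ / r - r / (2 * σ))) := by
  have hσsq : 0 < σ ^ 2 := by positivity
  have hcoe : (((σ ^ 2).toNNReal : NNReal) : ℝ) = σ ^ 2 := Real.coe_toNNReal _ hσsq.le
  have hv : (σ ^ 2).toNNReal ≠ 0 := (Real.toNNReal_pos.2 hσsq).ne'
  let c : Fin d → ℝ := fun i => (a i - b i) / (r * σ)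
  have hvar : ∑ i, (c i ^ 2).toNNReal * (σ ^ 2).toNNReal = 1 := by
    rw [← NNReal.coe_inj]
    push_cast
    simp_rw [Real.coe_toNNReal _ (sq_nonneg _), c, div_pow]
    rw [← Finset.sum_mul, ← Finset.sum_div, hsum]
    field_simp
  have hlaw := map_linear_pi_gaussianReal c a (σ ^ 2).toNNReal
  rw [hvar] at hlaw
  have hloss (x : Fin d → ℝ) :
      ∑ i, ((x i - b i) ^ 2 - (x i - a i) ^ 2) / (2 * ((σ ^ 2).toNNReal : ℝ)) =
        r / σ * (∑ i, c i * (x i - a i)) + r ^ 2 / (2 * σ ^ 2) := by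
    rw [← hsum, Finset.mul_sum, Finset.sum_div, ← Finset.sum_add_distrib, hcoe]
    refine Finset.sum_congr rfl fun i _ => ?_
    simp only [c]
    field_simp
    ring
  have hdens := pi_gaussianReal_eq_withDensity a b hv
  have hle := withDensity_exp_le_add (Measure.pi fun i => gaussianReal (b i) (σ ^ 2).toNNReal)
    (ℓ := fun x => ∑ i, ((x i - b i) ^ 2 - (x i - a i) ^ 2) / (2 * ((σ ^ 2).toNNReal : ℝ)))
    (by fun_prop) ε hE
  rw [← hdens] at hle
  refine hle.trans (add_le_add le_rfl ?_)
  rw [← hlaw, Measure.map_apply (by fun_prop) measurableSet_Ioi]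
  refine measure_mono fun x (hx : ε < _) => ?_
  rw [hloss] at hx
  change ε * σ / r - r / (2 * σ) < ∑ i, c i * (x i - a i)
  have h : ε * σ / r < (r / σ * (∑ i, c i * (x i - a i)) + r ^ 2 / (2 * σ ^ 2)) * σ / r := by
    gcongr
  have heq : (r / σ * (∑ i, c i * (x i - a i)) + r ^ 2 / (2 * σ ^ 2)) * σ / r =
      (∑ i, c i * (x i - a i)) + r / (2 * σ) := by
    field_simp
  linarith

end ProbabilityTheory

/-- Gaussian mechanism is `(ε, δ)`-differentially private.
Let `f : 𝒟 → ℝ^d` be a query with ℓ₂ global sensitivity at most `Δ` w.r.t. the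
adjacency relation `Adj`, let `ε, δ ∈ (0,1)`, and set
`σ = Δ · √(2 log(1.25/δ)) / ε`.  The mechanism releasing `f(D) + N(0, σ²·I)`,
i.e. the product of Gaussians `⨂ᵢ N(f(D)ᵢ, σ²)`, satisfies `(ε, δ)`-DP. -/
theorem gaussian_mechanism_dp {𝒟 : Type*} (Adj : 𝒟 → 𝒟 → Prop)
    (d : ℕ) (hd : 1 ≤ d) (f : 𝒟 → Fin d → ℝ) (Δ : ℝ) (hΔ : 0 < Δ)
    (hsens : ∀ D D', Adj D D' →
      Real.sqrt (∑ i : Fin d, (f D i - f D' i) ^ 2) ≤ Δ)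
    (ε δ : ℝ) (hε : ε ∈ Set.Ioo (0 : ℝ) 1) (hδ : δ ∈ Set.Ioo (0 : ℝ) 1)
    (σ : ℝ) (hσ : σ = Δ * Real.sqrt (2 * Real.log (1.25 / δ)) / ε)
    (M : 𝒟 → Measure (Fin d → ℝ))
    (hM : ∀ D, M D = Measure.pi (fun i => gaussianReal (f D i) (σ ^ 2).toNNReal)) :
    ∀ D D', Adj D D' → ∀ E : Set (Fin d → ℝ), MeasurableSet E →
      M D E ≤ ENNReal.ofReal (Real.exp ε) * M D' E + ENNReal.ofReal δ := by
  intro D D' hadj E hE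
  rw [hM D, hM D']
  set c := Real.sqrt (2 * Real.log (1.25 / δ)) with hc
  have hε0 : 0 < ε := hε.1
  have hδ0 : 0 < δ := hδ.1
  have hcpos : 0 < c := Real.sqrt_pos.2 <| mul_pos two_pos <| Real.log_pos <| by
    rw [one_lt_div hδ0]
    linarith [hδ.2]
  have hσpos : 0 < σ := by rw [hσ]; positivity
  set r := Real.sqrt (∑ i : Fin d, (f D i - f D' i) ^ 2)
  have hrΔ : r ≤ Δ := hsens D D' hadj
  have hnn : 0 ≤ ∑ i : Fin d, (f D i - f D' i) ^ 2 := Finset.sum_nonneg fun i _ => sq_nonneg _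
  have hsum : ∑ i : Fin d, (f D i - f D' i) ^ 2 = r ^ 2 := (Real.sq_sqrt hnn).symm
  have hr_nonneg : 0 ≤ r := Real.sqrt_nonneg _
  rcases hr_nonneg.eq_or_lt with hr0 | hrpos
  · rw [← hr0, zero_pow two_ne_zero, Finset.sum_eq_zero_iff_of_nonneg fun i _ => sq_nonneg _]
      at hsum
    have hf : f D = f D' := funext fun i =>
      sub_eq_zero.1 (pow_eq_zero_iff two_ne_zero |>.1 (hsum i (Finset.mem_univ i)))
    rw [hf]
    refine le_add_right (le_mul_of_one_le_left zero_le ?_)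
    rw [ENNReal.one_le_ofReal]
    exact Real.one_le_exp hε0.le
  · refine (pi_gaussianReal_le_add (f D) (f D') hrpos hσpos hsum ε hE).trans ?_
    refine add_le_add le_rfl ((measure_mono (Set.Ioi_subset_Ioi ?_)).trans
      (gaussianReal_Ioi_calibrated_le hε hδ hc))
    have hc_eq : c = ε * σ / Δ := by rw [hσ]; field_simp
    have hratio : ε / (2 * c) = Δ / (2 * σ) := by rw [hσ]; field_simp
    rw [hratio, hc_eq]
    gcongr
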